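/- If 1 ≤ p ≤ 2 and x* is the unique global minimizer of Φ, then the IRLS iterates converge linearly in cost: there exist ν < 1 and T ≥ 0 such that for all t ≥ T, Φ(x^{(t+1)}) − Φ(x*) ≤ ν (Φ(x^{(t)}) − Φ(x*)). -/

import Mathlib

open scoped ContDiff RealInnerProductSpace
open Filter

/-!
Write `x⁺` for the IRLS successor of `x` and `M` for the total weight at `x`. Concavity of
`r ↦ r ^ (p / 2)` majorizes `Φ` by a quadratic minimized at `x⁺`, hence
`Φ x - Φ x⁺ ≥ (p / 2) M ‖x - x⁺‖ ^ 2`. Since `p ≥ 1` and `ε > 0`, each summand of `Φ` is strongly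
convex on bounded sets, with a modulus proportional to its weight; minimizing the resulting
quadratic lower bound for `Φ y` over `y` gives the Polyak–Łojasiewicz inequality
`θ (Φ x - Φ y) ≤ (p / 2) M ‖x - x⁺‖ ^ 2`. Together, `Φ x⁺ - Φ y ≤ (1 - θ) (Φ x - Φ y)`. The
constant `θ` is uniform along the iteration because all iterates stay in a fixed bounded convex
hull.
-/

theorem rpow_le_rpow_add_mul_sub {q r s : ℝ} (hq0 : 0 ≤ q) (hq1 : q ≤ 1) (hr : 0 ≤ r)
    (hs : 0 < s) : r ^ q ≤ s ^ q + q * s ^ (q - 1) * (r - s) := by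
  have bernoulli := rpow_one_add_le_one_add_mul_self (s := r / s - 1)
    (by linarith [div_nonneg hr hs.le]) hq0 hq1
  rw [add_sub_cancel, Real.div_rpow hr hs.le, div_le_iff₀ (Real.rpow_pos_of_pos hs q)] at bernoulli
  calc r ^ q ≤ (1 + q * (r / s - 1)) * s ^ q := bernoulli
    _ = s ^ q + q * s ^ (q - 1) * (r - s) := by rw [Real.rpow_sub_one hs.ne']; field_simp

theorem rpow_add_mul_sub_le_rpow {q r s : ℝ} (hq : 1 ≤ q) (hr : 0 ≤ r) (hs : 0 < s) :
    s ^ q + q * s ^ (q - 1) * (r - s) ≤ r ^ q := by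
  have bernoulli := one_add_mul_self_le_rpow_one_add (s := r / s - 1)
    (by linarith [div_nonneg hr hs.le]) hq
  rw [add_sub_cancel, Real.div_rpow hr hs.le, le_div_iff₀ (Real.rpow_pos_of_pos hs q)] at bernoulli
  calc s ^ q + q * s ^ (q - 1) * (r - s) = (1 + q * (r / s - 1)) * s ^ q := by
        rw [Real.rpow_sub_one hs.ne']; field_simp
    _ ≤ r ^ q := bernoulli

section WeightedMean

theorem sum_smul_sub_eq_sum_smul_sub_centerMass {𝕜 F ι : Type*} [Field 𝕜] [AddCommGroup F]
    [Module 𝕜 F] {s : Finset ι} {m : ι → 𝕜} (hm : ∑ j ∈ s, m j ≠ 0)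
    (a : ι → F) (x : F) :
    ∑ j ∈ s, m j • (x - a j) = (∑ j ∈ s, m j) • (x - s.centerMass m a) := by
  simp only [smul_sub, Finset.sum_sub_distrib, ← Finset.sum_smul, Finset.centerMass,
    smul_inv_smul₀ hm]

variable {E ι : Type*} [SeminormedAddCommGroup E] [InnerProductSpace ℝ E] {s : Finset ι} {m : ι → ℝ}

theorem sum_mul_inner_sub_eq_sum_mul_inner_sub_centerMass (hm : ∑ j ∈ s, m j ≠ 0) (a : ι → E)
    (x v : E) :
    ∑ j ∈ s, m j * ⟪x - a j, v⟫ = (∑ j ∈ s, m j) * ⟪x - s.centerMass m a, v⟫ := by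
  simp only [← real_inner_smul_left, ← sum_inner, sum_smul_sub_eq_sum_smul_sub_centerMass hm]

/-- The Huygens–Steiner (parallel axis) identity. -/
theorem sum_mul_norm_sub_sq_eq_add_centerMass (hm : ∑ j ∈ s, m j ≠ 0) (a : ι → E) (x : E) :
    ∑ j ∈ s, m j * ‖x - a j‖ ^ 2 =
      ∑ j ∈ s, m j * ‖s.centerMass m a - a j‖ ^ 2 +
        (∑ j ∈ s, m j) * ‖x - s.centerMass m a‖ ^ 2 := by
  have cross_eq_zero := sum_mul_inner_sub_eq_sum_mul_inner_sub_centerMass hm a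
    (s.centerMass m a) (x - s.centerMass m a)
  rw [sub_self, inner_zero_left, mul_zero] at cross_eq_zero
  generalize s.centerMass m a = c at *
  have expand (j : ι) : m j * ‖x - a j‖ ^ 2 =
      m j * ‖c - a j‖ ^ 2 + 2 * (m j * ⟪c - a j, x - c⟫) + m j * ‖x - c‖ ^ 2 := by
    rw [← sub_add_sub_cancel' c (a j) x, norm_add_sq_real]
    ring
  simp only [expand, Finset.sum_add_distrib, ← Finset.mul_sum, cross_eq_zero, mul_zero, add_zero,
    Finset.sum_mul]

end WeightedMean

section SmoothedPower

variable {E : Type*} [SeminormedAddCommGroup E] {ε : ℝ}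

theorem norm_sq_add_rpow_le (hε : 0 < ε) {p : ℝ} (hp0 : 0 ≤ p) (hp2 : p ≤ 2) (u v : E) :
    (‖v‖ ^ 2 + ε) ^ (p / 2) ≤
      (‖u‖ ^ 2 + ε) ^ (p / 2) + p / 2 * (‖u‖ ^ 2 + ε) ^ (p / 2 - 1) * (‖v‖ ^ 2 - ‖u‖ ^ 2) := by
  have tangent := rpow_le_rpow_add_mul_sub (q := p / 2) (r := ‖v‖ ^ 2 + ε) (s := ‖u‖ ^ 2 + ε)
    (by linarith) (by linarith) (by positivity) (by positivity)
  rwa [add_sub_add_right_eq_sub] at tangent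

variable [InnerProductSpace ℝ E]

/-- A quantitative Cauchy–Schwarz inequality for the vectors `(u, √ε)` and `(v, √ε)`. -/
theorem mul_norm_sub_sq_le_sqrt_mul_sqrt_sub_inner (hε : 0 ≤ ε) (u v : E) :
    ε * ‖v - u‖ ^ 2 ≤
      2 * (√(‖u‖ ^ 2 + ε) * √(‖v‖ ^ 2 + ε)) *
        (√(‖u‖ ^ 2 + ε) * √(‖v‖ ^ 2 + ε) - (⟪u, v⟫ + ε)) := by
  have cauchy_schwarz : ⟪u, v⟫ ^ 2 ≤ ‖u‖ ^ 2 * ‖v‖ ^ 2 := by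
    rw [← mul_pow]
    exact sq_le_sq.2 (by simpa using abs_real_inner_le_norm u v)
  have norm_sub : ‖v - u‖ ^ 2 = ‖v‖ ^ 2 - 2 * ⟪u, v⟫ + ‖u‖ ^ 2 := by
    rw [norm_sub_sq_real, real_inner_comm]
  have sq_prod : (√(‖u‖ ^ 2 + ε) * √(‖v‖ ^ 2 + ε)) ^ 2 = (‖u‖ ^ 2 + ε) * (‖v‖ ^ 2 + ε) := by
    rw [mul_pow, Real.sq_sqrt (by positivity), Real.sq_sqrt (by positivity)]
  generalize √(‖u‖ ^ 2 + ε) * √(‖v‖ ^ 2 + ε) = P at *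
  calc ε * ‖v - u‖ ^ 2 ≤ P ^ 2 - (⟪u, v⟫ + ε) ^ 2 := by rw [sq_prod, norm_sub]; linarith
    _ ≤ 2 * P * (P - (⟪u, v⟫ + ε)) := by linarith [sq_nonneg (P - (⟪u, v⟫ + ε))]

theorem inner_add_le_sqrt_mul_sqrt_of_norm_le (hε : 0 < ε) {R : ℝ} {u v : E} (hu : ‖u‖ ≤ R)
    (hv : ‖v‖ ≤ R) :
    2 * (⟪u, v⟫ + ε) + ε / (R ^ 2 + ε) * ‖v - u‖ ^ 2 ≤
      2 * (√(‖u‖ ^ 2 + ε) * √(‖v‖ ^ 2 + ε)) := by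
  have gap := mul_norm_sub_sq_le_sqrt_mul_sqrt_sub_inner hε.le u v
  have prod_pos : 0 < √(‖u‖ ^ 2 + ε) * √(‖v‖ ^ 2 + ε) := by positivity
  have prod_le : √(‖u‖ ^ 2 + ε) * √(‖v‖ ^ 2 + ε) ≤ R ^ 2 + ε := by
    rw [← Real.mul_self_sqrt (by positivity : 0 ≤ R ^ 2 + ε)]
    gcongr
  generalize √(‖u‖ ^ 2 + ε) * √(‖v‖ ^ 2 + ε) = P at *
  have : ε / (R ^ 2 + ε) * ‖v - u‖ ^ 2 ≤ 2 * (P - (⟪u, v⟫ + ε)) :=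
    calc ε / (R ^ 2 + ε) * ‖v - u‖ ^ 2 ≤ ε / P * ‖v - u‖ ^ 2 := by gcongr
      _ = ε * ‖v - u‖ ^ 2 / P := by ring
      _ ≤ 2 * (P - (⟪u, v⟫ + ε)) := by rw [div_le_iff₀ prod_pos]; linarith
  linarith

/-- Strong convexity of `u ↦ (‖u‖ ^ 2 + ε) ^ (p / 2)` on the ball of radius `R`. -/
theorem norm_sq_add_rpow_add_le (hε : 0 < ε) {p : ℝ} (hp : 1 ≤ p) {R : ℝ} {u v : E}
    (hu : ‖u‖ ≤ R) (hv : ‖v‖ ≤ R) :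
    (‖u‖ ^ 2 + ε) ^ (p / 2) +
        p / 2 * (‖u‖ ^ 2 + ε) ^ (p / 2 - 1) *
          (2 * ⟪u, v - u⟫ + ε / (R ^ 2 + ε) * ‖v - u‖ ^ 2) ≤
      (‖v‖ ^ 2 + ε) ^ (p / 2) := by
  have inner_le := inner_add_le_sqrt_mul_sqrt_of_norm_le hε hu hv
  have sq_sqrt : √(‖u‖ ^ 2 + ε) ^ 2 = ‖u‖ ^ 2 + ε := Real.sq_sqrt (by positivity)
  have σ_pos : 0 < √(‖u‖ ^ 2 + ε) := by positivity
  have tangent := rpow_add_mul_sub_le_rpow hp (Real.sqrt_nonneg (‖v‖ ^ 2 + ε)) σ_pos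
  rw [show p / 2 - 1 = (p - 2) / 2 by ring, Real.rpow_div_two_eq_sqrt _ (by positivity),
    Real.rpow_div_two_eq_sqrt _ (by positivity), Real.rpow_div_two_eq_sqrt _ (by positivity)]
  generalize √(‖u‖ ^ 2 + ε) = σ at *
  generalize √(‖v‖ ^ 2 + ε) = ρ at *
  have rpow_pred : σ ^ (p - 1) = σ ^ (p - 2) * σ := by
    rw [← Real.rpow_add_one σ_pos.ne']; congr 1; ring
  calc σ ^ p + p / 2 * σ ^ (p - 2) * (2 * ⟪u, v - u⟫ + ε / (R ^ 2 + ε) * ‖v - u‖ ^ 2)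
      ≤ σ ^ p + p / 2 * σ ^ (p - 2) * (2 * (σ * ρ - σ ^ 2)) := by
        gcongr
        rw [inner_sub_right, real_inner_self_eq_norm_sq]
        linarith
    _ = σ ^ p + p * σ ^ (p - 1) * (ρ - σ) := by rw [rpow_pred]; ring
    _ ≤ ρ ^ p := tangent

end SmoothedPower

section IRLS

variable {E ι : Type*} [SeminormedAddCommGroup E]

/-- The weight `μ_j` that iteratively reweighted least squares gives to the center `a j` at the
iterate `x`. -/
noncomputable def irlsWeight (a : ι → E) (w : ι → ℝ) (ε p : ℝ) (x : E) (j : ι) : ℝ :=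
  w j * (‖x - a j‖ ^ 2 + ε) ^ (p / 2 - 1)

variable {a : ι → E} {w : ι → ℝ} {ε p : ℝ}

theorem irlsWeight_pos (hw : ∀ j, 0 < w j) (hε : 0 < ε) (x : E) (j : ι) :
    0 < irlsWeight a w ε p x j :=
  mul_pos (hw j) (by positivity)

variable [Fintype ι]

/-- The smoothed `p`-power cost `Φ`, with centers `a`, weights `w` and smoothing parameter `ε`. -/
noncomputable def irlsCost (a : ι → E) (w : ι → ℝ) (ε p : ℝ) (x : E) : ℝ :=
  ∑ j, w j * (‖x - a j‖ ^ 2 + ε) ^ (p / 2)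

theorem sum_irlsWeight_pos [Nonempty ι] (hw : ∀ j, 0 < w j) (hε : 0 < ε) (x : E) :
    0 < ∑ j, irlsWeight a w ε p x j :=
  Finset.sum_pos (fun j _ => irlsWeight_pos hw hε x j) Finset.univ_nonempty

section NormedSpace

variable [NormedSpace ℝ E]

/-- One step of iteratively reweighted least squares: the mean of the centers with the weights
`irlsWeight` at `x`. -/
noncomputable def irlsStep (a : ι → E) (w : ι → ℝ) (ε p : ℝ) (x : E) : E :=
  Finset.univ.centerMass (irlsWeight a w ε p x) a

theorem irlsStep_mem_convexHull [Nonempty ι] (hw : ∀ j, 0 < w j) (hε : 0 < ε) (x : E) :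
    irlsStep a w ε p x ∈ convexHull ℝ (Set.range a) :=
  Finset.univ.centerMass_mem_convexHull (fun j _ => (irlsWeight_pos hw hε x j).le)
    (sum_irlsWeight_pos hw hε x) fun j _ => Set.mem_range_self j

theorem exists_forall_norm_sub_le_of_irlsStep [Nonempty ι] (hw : ∀ j, 0 < w j) (hε : 0 < ε)
    {x : ℕ → E} (hx : ∀ t, x (t + 1) = irlsStep a w ε p (x t)) :
    ∃ R, ∀ t j, ‖x t - a j‖ ≤ R := by
  set K := convexHull ℝ (insert (x 0) (Set.range a))
  have K_bounded : Bornology.IsBounded K :=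
    isBounded_convexHull.2 ((Set.finite_range a).insert (x 0)).isBounded
  have iterate_mem : ∀ t, x t ∈ K
    | 0 => subset_convexHull ℝ _ (Set.mem_insert _ _)
    | t + 1 => hx t ▸ convexHull_mono (Set.subset_insert _ _) (irlsStep_mem_convexHull hw hε (x t))
  have center_mem (j : ι) : a j ∈ K :=
    subset_convexHull ℝ _ (Set.mem_insert_of_mem _ (Set.mem_range_self j))
  refine ⟨Metric.diam K, fun t j => ?_⟩
  rw [← dist_eq_norm]
  exact Metric.dist_le_diam_of_mem K_bounded (iterate_mem t) (center_mem j)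

end NormedSpace

section InnerProductSpace

variable [InnerProductSpace ℝ E] [Nonempty ι]

theorem irlsCost_irlsStep_add_le (hw : ∀ j, 0 < w j) (hε : 0 < ε) (hp0 : 0 ≤ p) (hp2 : p ≤ 2)
    (x : E) :
    irlsCost a w ε p (irlsStep a w ε p x) +
        p / 2 * ((∑ j, irlsWeight a w ε p x j) * ‖x - irlsStep a w ε p x‖ ^ 2) ≤
      irlsCost a w ε p x := by
  have weight_ne : ∑ j, irlsWeight a w ε p x j ≠ 0 := (sum_irlsWeight_pos hw hε x).ne'
  have huygens : ∑ j, irlsWeight a w ε p x j * ‖x - a j‖ ^ 2 =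
      ∑ j, irlsWeight a w ε p x j * ‖irlsStep a w ε p x - a j‖ ^ 2 +
        (∑ j, irlsWeight a w ε p x j) * ‖x - irlsStep a w ε p x‖ ^ 2 :=
    sum_mul_norm_sub_sq_eq_add_centerMass weight_ne a x
  generalize irlsStep a w ε p x = z at *
  have majorant : irlsCost a w ε p z ≤ irlsCost a w ε p x +
      p / 2 * (∑ j, irlsWeight a w ε p x j * ‖z - a j‖ ^ 2 -
        ∑ j, irlsWeight a w ε p x j * ‖x - a j‖ ^ 2) := by
    simp only [irlsCost, ← Finset.sum_sub_distrib, Finset.mul_sum, ← Finset.sum_add_distrib]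
    refine Finset.sum_le_sum fun j _ => ?_
    have majorant_j := mul_le_mul_of_nonneg_left
      (norm_sq_add_rpow_le hε hp0 hp2 (x - a j) (z - a j)) (hw j).le
    rw [irlsWeight]
    linarith
  rw [huygens] at majorant
  linarith

theorem irlsCost_add_le_of_norm_sub_le (hw : ∀ j, 0 < w j) (hε : 0 < ε) (hp : 1 ≤ p) {R : ℝ}
    {x y : E} (hx : ∀ j, ‖x - a j‖ ≤ R) (hy : ∀ j, ‖y - a j‖ ≤ R) :
    irlsCost a w ε p x + p / 2 * ((∑ j, irlsWeight a w ε p x j) *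
        (2 * ⟪x - irlsStep a w ε p x, y - x⟫ + ε / (R ^ 2 + ε) * ‖y - x‖ ^ 2)) ≤
      irlsCost a w ε p y := by
  have weight_ne : ∑ j, irlsWeight a w ε p x j ≠ 0 := (sum_irlsWeight_pos hw hε x).ne'
  have first_order : ∑ j, irlsWeight a w ε p x j * ⟪x - a j, y - x⟫ =
      (∑ j, irlsWeight a w ε p x j) * ⟪x - irlsStep a w ε p x, y - x⟫ :=
    sum_mul_inner_sub_eq_sum_mul_inner_sub_centerMass weight_ne a x (y - x)
  calc _ = irlsCost a w ε p x + p / 2 * ∑ j, irlsWeight a w ε p x j *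
        (2 * ⟪x - a j, y - x⟫ + ε / (R ^ 2 + ε) * ‖y - x‖ ^ 2) := by
        simp only [mul_add, Finset.sum_add_distrib, ← Finset.sum_mul, mul_left_comm _ (2 : ℝ),
          ← Finset.mul_sum, first_order]
    _ ≤ irlsCost a w ε p y := by
        simp only [irlsCost, Finset.mul_sum, ← Finset.sum_add_distrib]
        refine Finset.sum_le_sum fun j _ => ?_
        have lower_bound_j :=
          mul_le_mul_of_nonneg_left (norm_sq_add_rpow_add_le hε hp (hx j) (hy j)) (hw j).le
        rw [sub_sub_sub_cancel_right] at lower_bound_j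
        rw [irlsWeight]
        linarith

/-- A Polyak–Łojasiewicz inequality: with `M` the total weight at `x`, the gradient of the cost at
`x` is `p * M • (x - irlsStep a w ε p x)`. -/
theorem irlsCost_sub_le_norm_sub_irlsStep_sq (hw : ∀ j, 0 < w j) (hε : 0 < ε)
    (hp : 1 ≤ p) {R : ℝ} {x y : E} (hx : ∀ j, ‖x - a j‖ ≤ R) (hy : ∀ j, ‖y - a j‖ ≤ R) :
    ε / (R ^ 2 + ε) * (irlsCost a w ε p x - irlsCost a w ε p y) ≤
      p / 2 * ((∑ j, irlsWeight a w ε p x j) * ‖x - irlsStep a w ε p x‖ ^ 2) := by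
  have lower_bound := irlsCost_add_le_of_norm_sub_le hw hε hp hx hy
  have weight_pos := sum_irlsWeight_pos (a := a) (p := p) hw hε x
  have modulus_pos : 0 < ε / (R ^ 2 + ε) := by positivity
  generalize irlsStep a w ε p x = z at *
  generalize ε / (R ^ 2 + ε) = θ at *
  generalize ∑ j, irlsWeight a w ε p x j = M at *
  have complete_square : -‖x - z‖ ^ 2 ≤ θ * (2 * ⟪x - z, y - x⟫ + θ * ‖y - x‖ ^ 2) := by
    have expand := norm_add_sq_real (x - z) (θ • (y - x))
    rw [real_inner_smul_right, norm_smul, mul_pow, Real.norm_eq_abs, sq_abs] at expand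
    linarith [sq_nonneg ‖x - z + θ • (y - x)‖]
  calc θ * (irlsCost a w ε p x - irlsCost a w ε p y)
      ≤ θ * -(p / 2 * (M * (2 * ⟪x - z, y - x⟫ + θ * ‖y - x‖ ^ 2))) := by gcongr; linarith
    _ = -(p / 2 * (M * (θ * (2 * ⟪x - z, y - x⟫ + θ * ‖y - x‖ ^ 2)))) := by ring
    _ ≤ -(p / 2 * (M * -‖x - z‖ ^ 2)) := by gcongr
    _ = p / 2 * (M * ‖x - z‖ ^ 2) := by ring

theorem irlsCost_irlsStep_sub_le (hw : ∀ j, 0 < w j) (hε : 0 < ε) (hp1 : 1 ≤ p)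
    (hp2 : p ≤ 2) {R : ℝ} {x y : E} (hx : ∀ j, ‖x - a j‖ ≤ R) (hy : ∀ j, ‖y - a j‖ ≤ R) :
    irlsCost a w ε p (irlsStep a w ε p x) - irlsCost a w ε p y ≤
      (1 - ε / (R ^ 2 + ε)) * (irlsCost a w ε p x - irlsCost a w ε p y) := by
  linarith [irlsCost_irlsStep_add_le (a := a) hw hε (by linarith) hp2 x,
    irlsCost_sub_le_norm_sub_irlsStep_sq hw hε hp1 hx hy]

theorem stmt_18_general (hw : ∀ j, 0 < w j) (hε : 0 < ε) (hp1 : 1 ≤ p) (hp2 : p ≤ 2)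
    {x : ℕ → E} (hx : ∀ t, x (t + 1) = irlsStep a w ε p (x t)) (y : E) :
    ∃ ν ∈ Set.Ico (0 : ℝ) 1, ∀ t,
      irlsCost a w ε p (x (t + 1)) - irlsCost a w ε p y ≤
        ν * (irlsCost a w ε p (x t) - irlsCost a w ε p y) := by
  obtain ⟨Rx, hRx⟩ := exists_forall_norm_sub_le_of_irlsStep hw hε hx
  obtain ⟨Ry, hRy⟩ := (Set.finite_range fun j => ‖y - a j‖).bddAbove
  have hy (j : ι) : ‖y - a j‖ ≤ Ry := hRy (Set.mem_range_self j)
  set R := max Rx Ry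
  have rate_pos : 0 < ε / (R ^ 2 + ε) := by positivity
  have rate_le_one : ε / (R ^ 2 + ε) ≤ 1 := div_le_one_of_le₀ (by linarith [sq_nonneg R])
    (by positivity)
  refine ⟨1 - ε / (R ^ 2 + ε), ⟨by linarith, by linarith⟩, fun t => ?_⟩
  rw [hx t]
  exact irlsCost_irlsStep_sub_le hw hε hp1 hp2 (fun j => (hRx t j).trans (le_max_left _ _))
    fun j => (hy j).trans (le_max_right _ _)

end InnerProductSpace

end IRLS

theorem stmt_18
    (d n : ℕ) (hd : 1 ≤ d) (hn : 1 ≤ n)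
    (a : Fin n → EuclideanSpace ℝ (Fin d))
    (w : Fin n → ℝ) (hw : ∀ j, 0 < w j)
    (ε : ℝ) (hε : 0 < ε)
    (p : ℝ) (hp1 : 1 ≤ p) (hp2 : p ≤ 2)
    (Φ : EuclideanSpace ℝ (Fin d) → ℝ)
    (hΦ : ∀ x, Φ x = ∑ j, w j * (‖x - a j‖ ^ 2 + ε) ^ (p / 2))
    (x : ℕ → EuclideanSpace ℝ (Fin d))
    (hx : ∀ t, x (t + 1) =
      (∑ j, w j * (‖x t - a j‖ ^ 2 + ε) ^ (p / 2 - 1))⁻¹ •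
        ∑ j, (w j * (‖x t - a j‖ ^ 2 + ε) ^ (p / 2 - 1)) • a j)
    (xstar : EuclideanSpace ℝ (Fin d))
    (hmin : ∀ y, Φ xstar ≤ Φ y)
    (huniq : ∀ z, (∀ y, Φ z ≤ Φ y) → z = xstar) :
    ∃ ν < (1 : ℝ), ∃ T : ℕ, ∀ t ≥ T,
      Φ (x (t + 1)) - Φ xstar ≤ ν * (Φ (x t) - Φ xstar) := by
  have : Nonempty (Fin n) := ⟨⟨0, hn⟩⟩
  obtain rfl : Φ = irlsCost a w ε p := funext hΦ
  obtain ⟨ν, ⟨-, hν⟩, contraction⟩ := stmt_18_general hw hε hp1 hp2 hx xstar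
  exact ⟨ν, hν, 0, fun t _ => contraction t⟩
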